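/- Let n ≥ 3 be an integer and let h, s be real numbers with 0 < h ≤ s/2. Set c = (h^n / s)^{1/(n−1)}. Then 0 < c < h, and 2c + (2(n−1)/s)·(1/(2n))·( c² − (n/(n−2))·h² + (2/(n−2))·h^n·c^{2−n} ) ≤ 8·(h^n/s)^{1/(n−1)}. -/

import Mathlib

/-!
The radius `c` balances the linear term `2r` of the estimate against the singular term
`hⁿ r^(2 - n)` of the comparison function `φ`: it satisfies `hⁿ c^(2 - n) = s c`. Since `c < h` and
`n / (n - 2) ≥ 1`, the quadratic part `c² - (n / (n - 2)) h²` of `φ(c)` is not positive, and the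
singular term alone gives `(2 (n - 1) / s) φ(c) ≤ (2 (n - 1) / (n (n - 2))) c`. The factor on the
right is at most `4 / 3` once `n ≥ 3`.
-/

namespace AbreschGromoll

/-- The comparison function `φ` of the Abresch–Gromoll argument at scale `l`: the radial solution of
`Δφ = 1` on `ℝⁿ` minus the origin with `φ(l) = φ'(l) = 0`. The dimension `n` is a real parameter. -/
noncomputable def comparisonFun (n l r : ℝ) : ℝ :=
  1 / (2 * n) * (r ^ 2 - n / (n - 2) * l ^ 2 + 2 / (n - 2) * l ^ n * r ^ (2 - n))

/-- The radius `c` at which the excess estimate is evaluated: the solution of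
`hⁿ c ^ (2 - n) = s c`. -/
noncomputable def balancingRadius (n h s : ℝ) : ℝ :=
  (h ^ n / s) ^ (1 / (n - 1))

variable {n h s : ℝ}

lemma balancingRadius_pos (hh : 0 < h) (hs : 0 < s) : 0 < balancingRadius n h s := by
  unfold balancingRadius
  positivity

lemma balancingRadius_rpow_sub_one (hn : n ≠ 1) (hh : 0 ≤ h) (hs : 0 ≤ s) :
    balancingRadius n h s ^ (n - 1) = h ^ n / s := by
  rw [balancingRadius, one_div, Real.rpow_inv_rpow (by positivity) (sub_ne_zero.mpr hn)]

lemma balancingRadius_lt (hn : 1 < n) (hh : 0 < h) (hhs : h < s) :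
    balancingRadius n h s < h := by
  have hs : 0 < s := hh.trans hhs
  refine (Real.rpow_lt_rpow_iff (balancingRadius_pos hh hs).le hh.le (sub_pos.mpr hn)).mp ?_
  calc
    balancingRadius n h s ^ (n - 1) = h ^ n / s :=
      balancingRadius_rpow_sub_one hn.ne' hh.le hs.le
    _ < h ^ n / h := div_lt_div_of_pos_left (by positivity) hh hhs
    _ = h ^ (n - 1) := (Real.rpow_sub_one hh.ne' n).symm

lemma rpow_mul_balancingRadius_rpow_two_sub (hn : n ≠ 1) (hh : 0 < h) (hs : 0 < s) :
    h ^ n * balancingRadius n h s ^ (2 - n) = s * balancingRadius n h s := by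
  have hpow : h ^ n = s * balancingRadius n h s ^ (n - 1) := by
    rw [balancingRadius_rpow_sub_one hn hh.le hs.le, mul_div_cancel₀ _ hs.ne']
  rw [hpow, mul_assoc, ← Real.rpow_add (balancingRadius_pos hh hs),
    show n - 1 + (2 - n) = 1 by ring, Real.rpow_one]

lemma comparisonFun_le {l r : ℝ} (hn : 2 < n) (hr : 0 ≤ r) (hrl : r ≤ l) :
    comparisonFun n l r ≤ l ^ n * r ^ (2 - n) / (n * (n - 2)) := by
  have hn₂ : 0 < n - 2 := sub_pos.mpr hn
  have hsq : r ^ 2 ≤ n / (n - 2) * l ^ 2 := calc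
    r ^ 2 ≤ l ^ 2 := pow_le_pow_left₀ hr hrl 2
    _ ≤ n / (n - 2) * l ^ 2 :=
      le_mul_of_one_le_left (sq_nonneg l) ((one_le_div hn₂).mpr (by linarith))
  calc
    comparisonFun n l r ≤ 1 / (2 * n) * (2 / (n - 2) * l ^ n * r ^ (2 - n)) := by
      unfold comparisonFun
      gcongr
      linarith
    _ = l ^ n * r ^ (2 - n) / (n * (n - 2)) := by field_simp

lemma mul_comparisonFun_balancingRadius_le (hn : 2 < n) (hh : 0 < h) (hhs : h < s) :
    2 * (n - 1) / s * comparisonFun n h (balancingRadius n h s) ≤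
      2 * (n - 1) / (n * (n - 2)) * balancingRadius n h s := by
  have hs : 0 < s := hh.trans hhs
  have : 0 < n - 1 := by linarith
  have hφ : comparisonFun n h (balancingRadius n h s) ≤
      s * balancingRadius n h s / (n * (n - 2)) := by
    rw [← rpow_mul_balancingRadius_rpow_two_sub (by linarith) hh hs]
    exact comparisonFun_le hn (balancingRadius_pos hh hs).le
      (balancingRadius_lt (by linarith) hh hhs).le
  calc
    2 * (n - 1) / s * comparisonFun n h (balancingRadius n h s) ≤
        2 * (n - 1) / s * (s * balancingRadius n h s / (n * (n - 2))) := by gcongr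
    _ = 2 * (n - 1) / (n * (n - 2)) * balancingRadius n h s := by field_simp

lemma two_mul_sub_one_div_le_four_thirds (hn : 3 ≤ n) : 2 * (n - 1) / (n * (n - 2)) ≤ 4 / 3 := by
  rw [div_le_div_iff₀ (by nlinarith) (by norm_num)]
  nlinarith

end AbreschGromoll

open AbreschGromoll in
theorem abresch_gromoll_final_estimate_general {n h s : ℝ} (hn : 2 < n) (hh : 0 < h)
    (hhs : h < s) :
    0 < balancingRadius n h s ∧ balancingRadius n h s < h ∧
      2 * balancingRadius n h s + 2 * (n - 1) / s * comparisonFun n h (balancingRadius n h s) ≤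
        (2 + 2 * (n - 1) / (n * (n - 2))) * balancingRadius n h s := by
  refine ⟨balancingRadius_pos hh (hh.trans hhs), balancingRadius_lt (by linarith) hh hhs, ?_⟩
  rw [add_mul]
  gcongr 2 * _ + ?_
  exact mul_comparisonFun_balancingRadius_le hn hh hhs

/-- The final quantitative computation in the proof of the Abresch–Gromoll
excess estimate: for an integer `n ≥ 3` and reals `0 < h ≤ s/2`, setting
`c = (hⁿ/s)^{1/(n-1)}` one has `0 < c < h` and
`2c + (2(n-1)/s)(1/(2n))(c² - (n/(n-2))h² + (2/(n-2))hⁿ c^{2-n}) ≤ 8 (hⁿ/s)^{1/(n-1)}`. -/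
theorem abresch_gromoll_final_estimate (n : ℕ) (hn : 3 ≤ n)
    (h s : ℝ) (hh : 0 < h) (hhs : h ≤ s / 2) :
    0 < (h ^ n / s) ^ ((1 : ℝ) / ((n : ℝ) - 1)) ∧
    (h ^ n / s) ^ ((1 : ℝ) / ((n : ℝ) - 1)) < h ∧
    2 * (h ^ n / s) ^ ((1 : ℝ) / ((n : ℝ) - 1)) +
      (2 * ((n : ℝ) - 1) / s) * (1 / (2 * (n : ℝ))) *
        (((h ^ n / s) ^ ((1 : ℝ) / ((n : ℝ) - 1))) ^ 2 -
          ((n : ℝ) / ((n : ℝ) - 2)) * h ^ 2 +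
          (2 / ((n : ℝ) - 2)) * h ^ n *
            ((h ^ n / s) ^ ((1 : ℝ) / ((n : ℝ) - 1))) ^ ((2 : ℝ) - (n : ℝ)))
      ≤ 8 * (h ^ n / s) ^ ((1 : ℝ) / ((n : ℝ) - 1)) := by
  have hn' : (3 : ℝ) ≤ n := by exact_mod_cast hn
  obtain ⟨hpos, hlt, hle⟩ :=
    abresch_gromoll_final_estimate_general (n := n) (by linarith) hh (by linarith : h < s)
  have hfactor : 2 + 2 * ((n : ℝ) - 1) / (n * (n - 2)) ≤ 8 := by
    linarith [AbreschGromoll.two_mul_sub_one_div_le_four_thirds hn']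
  have hle_eight := hle.trans (mul_le_mul_of_nonneg_right hfactor hpos.le)
  simp only [AbreschGromoll.comparisonFun, AbreschGromoll.balancingRadius, Real.rpow_natCast,
    ← mul_assoc] at hpos hlt hle_eight
  exact ⟨hpos, hlt, hle_eight⟩
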